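/- Let d ≥ 3. For every bispecial factor w of u_d, both (d−1)w and w(d−1) belong to L(u_d); moreover, the only bispecial factors of u_d with more than two left extensions or more than two right extensions are the words F_0, F_1, …, F_{d−3}. -/

import Mathlib

namespace RichRT

variable {A : Type*}

/-- The word `w` occurs in the sequence `u` at position `j`. -/
def OccursAt (w : List A) (u : ℕ → A) (j : ℕ) : Prop :=
  w = (List.range w.length).map fun t => u (j + t)

/-- `w` is a factor of the infinite sequence `u`. -/
def IsFactorS (w : List A) (u : ℕ → A) : Prop :=
  ∃ j : ℕ, OccursAt w u j

/-- `u` is recurrent: every factor occurs infinitely often. -/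
def Recurrent (u : ℕ → A) : Prop :=
  ∀ w : List A, IsFactorS w u → ∀ N : ℕ, ∃ j, N ≤ j ∧ OccursAt w u j

/-- The number of distinct palindromic factors of a finite word. -/
noncomputable def palCount (w : List A) : ℕ :=
  Set.ncard {p : List A | p <:+: w ∧ p.reverse = p}

/-- A finite word of length `n` is rich if it has exactly `n+1` palindromic factors. -/
def RichWord (w : List A) : Prop := palCount w = w.length + 1

/-- A sequence is rich if all its factors are rich. -/
def RichSeq (u : ℕ → A) : Prop := ∀ w : List A, IsFactorS w u → RichWord w

/-- The prefix of length `k` of the periodic sequence `vvv⋯`. -/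
def powPref (v : List A) (k : ℕ) : List A := ((List.replicate k v).flatten).take k

/-- The set of exponents `k/|v|` of fractional powers `v^(k/|v|)` occurring in `u`,
with `|v| ≥ n`. -/
def expSet (u : ℕ → A) (n : ℕ) : Set ℝ :=
  {x | ∃ (v : List A) (k : ℕ), v ≠ [] ∧ n ≤ v.length ∧
    IsFactorS (powPref v k) u ∧ x = (k : ℝ) / (v.length : ℝ)}

/-- The critical exponent of a sequence, with values in `EReal`. -/
noncomputable def critExp (u : ℕ → A) : EReal :=
  sSup ((fun x : ℝ => (x : EReal)) '' expSet u 0)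

/-- The asymptotic critical exponent of a sequence: `⊤` if the critical exponent is `⊤`,
otherwise the limit (= infimum, by monotonicity) over `n` of the suprema of exponents of
powers `v^e` with `|v| ≥ n`. -/
noncomputable def acritExp (u : ℕ → A) : EReal :=
  if critExp u = ⊤ then ⊤
  else ⨅ n : ℕ, sSup ((fun x : ℝ => (x : EReal)) '' expSet u n)

/-- The morphism `φ_d` on letters: `i ↦ 0(i+1)` for `i < d-1`, `d-1 ↦ 0(d-1)(d-1)`. -/
def phiL (d : ℕ) (i : ℕ) : List ℕ :=
  if i < d - 1 then [0, i + 1] else [0, d - 1, d - 1]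

/-- The morphism `φ_d` on words. -/
def phiW (d : ℕ) (w : List ℕ) : List ℕ := w.flatMap (phiL d)

/-- `u` is the fixed point of `φ_d`: it begins with `0` and `φ_d(u) = u`, i.e. the image
of every prefix of `u` is again a prefix of `u`. -/
def IsPhiFixed (d : ℕ) (u : ℕ → ℕ) : Prop :=
  u 0 = 0 ∧ ∀ m : ℕ, OccursAt (phiW d ((List.range m).map u)) u 0

/-- Left extensions of `w` in `u`. -/
def Lext (u : ℕ → ℕ) (w : List ℕ) : Set (List ℕ) :=
  {x | ∃ i : ℕ, x = i :: w ∧ IsFactorS x u}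

/-- Right extensions of `w` in `u`. -/
def Rext (u : ℕ → ℕ) (w : List ℕ) : Set (List ℕ) :=
  {x | ∃ i : ℕ, x = w ++ [i] ∧ IsFactorS x u}

/-- Both-sided extensions of `w` in `u`. -/
def Bext (u : ℕ → ℕ) (w : List ℕ) : Set (List ℕ) :=
  {x | ∃ i j : ℕ, x = i :: (w ++ [j]) ∧ IsFactorS x u}

/-- `w` is a bispecial factor of `u`. -/
def Bispecial (u : ℕ → ℕ) (w : List ℕ) : Prop :=
  IsFactorS w u ∧ 2 ≤ (Lext u w).ncard ∧ 2 ≤ (Rext u w).ncard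

/-- The bilateral order `b(w) = #Bext(w) − #Lext(w) − #Rext(w) + 1`. -/
noncomputable def bord (u : ℕ → ℕ) (w : List ℕ) : ℤ :=
  ((Bext u w).ncard : ℤ) - ((Lext u w).ncard : ℤ) - ((Rext u w).ncard : ℤ) + 1

/-- The palindromes `F_0 = ε`, `F_i = φ(F_{i-1})0`. -/
def Fword (d : ℕ) : ℕ → List ℕ
  | 0 => []
  | i + 1 => phiW d (Fword d i) ++ [0]

/-- Membership in the set `𝒯` of bispecial triplets. -/
def TripleMem (d : ℕ) (u : ℕ → ℕ) (t : ℕ × List ℕ × ℕ) : Prop :=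
  Bispecial u t.2.1 ∧ t.1 < d - 1 ∧ t.2.2 < d - 1 ∧
    IsFactorS (t.1 :: t.2.1) u ∧ IsFactorS (t.2.1 ++ [t.2.2]) u

/-- The map `f` on triplets. -/
def fmap (d : ℕ) (t : ℕ × List ℕ × ℕ) : ℕ × List ℕ × ℕ :=
  ((t.1 + 1) % (d - 1),
   (if t.1 = d - 2 then [d - 1] else []) ++ phiW d t.2.1 ++ [0] ++
     (if t.2.2 = d - 2 then [d - 1] else []),
   (t.2.2 + 1) % (d - 1))

/-- The initial triplets `T_k = (0, ε, k)` for `k ≤ d-2` and `T_{d-1} = (0, d-1, 0)`. -/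
def Tinit (d k : ℕ) : ℕ × List ℕ × ℕ :=
  if k = d - 1 then (0, [d - 1], 0) else (0, ([] : List ℕ), k)

/-- The Parikh vector of a word. -/
def parikh (d : ℕ) (w : List ℕ) : Fin d → ℕ := fun i => w.count (i : ℕ)

/-- The incidence matrix of `φ_d`. -/
def Mmat (d : ℕ) : Matrix (Fin d) (Fin d) ℕ := fun i j => (phiL d (j : ℕ)).count (i : ℕ)

/-- `r` is a return word to `w` in `u`. -/
def ReturnWord (u : ℕ → ℕ) (w r : List ℕ) : Prop :=
  ∃ j ℓ : ℕ, j < ℓ ∧ OccursAt w u j ∧ OccursAt w u ℓ ∧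
    (∀ m, j < m → m < ℓ → ¬ OccursAt w u m) ∧
    r = (List.range (ℓ - j)).map fun t => u (j + t)

/-- `R` is a complete return word to `w` in `u`. -/
def CompleteReturn (u : ℕ → ℕ) (w R : List ℕ) : Prop :=
  ∃ r : List ℕ, ReturnWord u w r ∧ R = r ++ w

/-!
The language of `u` consists of the factors of the palindromes `F_n`, so it is closed under
reversal. In `φ(z)0` the letter `0` occurs exactly at the beginnings of the blocks `φ(i)` and at the
very end; hence a bispecial word which is neither empty nor both begins and ends with `d-1` is
`φ(v)0`, `(d-1)φ(v)0` or `φ(v)0(d-1)` for a shorter bispecial `v`.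

Passing from `v` to `φ(v)0` applies the map `e(i) = min(i+1, d-1)` to the letters extending `v` on
either side. It fixes `d-1` and merges it with `d-2`, so `d-1` stays an extension, while `F_n`,
which starts as `F_0 = ε` with all `d` letters as extensions, keeps only letters `≥ min(n, d-1)`.
A word beginning with a letter other than `0` has at most the left extensions `0` and `d-1`.
Induction on the length then gives both claims, with at most one extension other than `d-1` on
either side outside `F_0, …, F_{d-3}`.
-/

/-! ### The morphism on words -/

/-- The letter `e(i)` that comes second and last in `φ(i)`. -/
def phiLast (d i : ℕ) : ℕ := min (i + 1) (d - 1)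

theorem phiLast_pos {d : ℕ} (hd : 2 ≤ d) (i : ℕ) : 0 < phiLast d i := by
  unfold phiLast; omega

theorem phiLast_last (d : ℕ) : phiLast d (d - 1) = d - 1 := by
  unfold phiLast; omega

theorem phiL_eq_cons_replicate (d i : ℕ) :
    phiL d i = 0 :: List.replicate (if i < d - 1 then 1 else 2) (phiLast d i) := by
  unfold phiL phiLast
  split_ifs with hi
  · rw [min_eq_left (by omega)]
    rfl
  · rw [min_eq_right (by omega)]
    rfl

theorem exists_phiL_eq_cons_cons (d i : ℕ) : ∃ r, phiL d i = 0 :: phiLast d i :: r := by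
  rw [phiL_eq_cons_replicate]
  split_ifs <;> exact ⟨_, rfl⟩

theorem exists_phiL_eq_concat (d i : ℕ) : ∃ s, phiL d i = s ++ [phiLast d i] := by
  rw [phiL_eq_cons_replicate]
  split_ifs
  exacts [⟨[0], rfl⟩, ⟨[0, phiLast d i], rfl⟩]

theorem phiL_pred_last (d : ℕ) : phiL d (d - 1) = [0, d - 1, d - 1] :=
  if_neg (lt_irrefl _)

theorem zero_notMem_tail_phiL {d : ℕ} (hd : 2 ≤ d) (i : ℕ) : 0 ∉ (phiL d i).tail := by
  rw [phiL_eq_cons_replicate, List.tail_cons, List.mem_replicate]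
  exact fun h => (phiLast_pos hd i).ne h.2

theorem phiL_injOn (d : ℕ) : Set.InjOn (phiL d) (Set.Iio d) := by
  intro a ha b hb h
  unfold phiL at h
  simp only [Set.mem_Iio] at ha hb
  split_ifs at h <;> 
    simp only [List.cons.injEq, reduceCtorEq, and_true, true_and, and_false] at h <;> omega

theorem phiW_nil (d : ℕ) : phiW d [] = [] := rfl

theorem phiW_cons (d a : ℕ) (w : List ℕ) : phiW d (a :: w) = phiL d a ++ phiW d w :=
  List.flatMap_cons

theorem phiW_singleton (d a : ℕ) : phiW d [a] = phiL d a := by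
  rw [phiW_cons, phiW_nil, List.append_nil]

theorem phiW_append (d : ℕ) (v w : List ℕ) : phiW d (v ++ w) = phiW d v ++ phiW d w :=
  List.flatMap_append

theorem length_le_length_phiW (d : ℕ) (v : List ℕ) : v.length ≤ (phiW d v).length := by
  induction v with
  | nil => exact le_rfl
  | cons a v ih =>
    rw [phiW_cons, phiL_eq_cons_replicate]
    simp only [List.cons_append, List.length_cons, List.length_append]
    omega

theorem head?_phiW_append_zero_cons (d : ℕ) (v q : List ℕ) :
    (phiW d v ++ 0 :: q).head? = some 0 := by
  cases v with
  | nil => rfl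
  | cons a v => rw [phiW_cons, phiL_eq_cons_replicate]; rfl

theorem reverse_phiW_append_zero (d : ℕ) (w : List ℕ) :
    (phiW d w ++ [0]).reverse = phiW d w.reverse ++ [0] := by
  induction w with
  | nil => rfl
  | cons a w ih =>
    rw [phiW_cons, List.reverse_cons, phiW_append, List.append_assoc, List.reverse_append, ih,
      phiW_singleton, phiL_eq_cons_replicate]
    simp

theorem phiW_ne_cons {d x : ℕ} (hx : x ≠ 0) (v w : List ℕ) : phiW d v ≠ x :: w := by
  intro h
  have hhead := head?_phiW_append_zero_cons d v []
  rw [h] at hhead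
  exact hx (Option.some.inj hhead)

theorem phiW_injOn {d : ℕ} (hd : 2 ≤ d) : Set.InjOn (phiW d) {v | ∀ x ∈ v, x < d} := by
  intro v
  induction v with
  | nil =>
    intro _ w _ h
    cases w with
    | nil => rfl
    | cons b w => rw [phiW_cons, phiL_eq_cons_replicate] at h; simp [phiW_nil] at h
  | cons a v ih =>
    intro hv w hw h
    cases w with
    | nil => rw [phiW_cons, phiL_eq_cons_replicate] at h; simp [phiW_nil] at h
    | cons b w =>
      simp only [Set.mem_ofPred_eq, List.forall_mem_cons] at hv hw
      have hd1 : d - 1 ≠ 0 := by omega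
      have hab : phiL d a = phiL d b ∧ phiW d v = phiW d w := by
        rw [phiW_cons, phiW_cons] at h
        unfold phiL at h ⊢
        split_ifs at h ⊢ <;>
          simp only [List.cons_append, List.nil_append, List.cons.injEq, true_and] at h
        · exact ⟨by rw [h.1], h.2⟩
        · exact absurd h.2 (phiW_ne_cons hd1 _ _)
        · exact absurd h.2.symm (phiW_ne_cons hd1 _ _)
        · exact ⟨rfl, h⟩
      rw [phiL_injOn d hv.1 hw.1 hab.1, ih hv.2 hw.2 hab.2]

/-! ### Desubstitution -/

theorem exists_append_eq_of_append_eq_phiW {d : ℕ} (hd : 2 ≤ d) {p s z : List ℕ}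
    (hs : s.head? = some 0) (h : p ++ s = phiW d z ++ [0]) :
    ∃ z₁ z₂, z = z₁ ++ z₂ ∧ p = phiW d z₁ ∧ s = phiW d z₂ ++ [0] := by
  obtain ⟨s, rfl⟩ : ∃ s', s = 0 :: s' := by
    cases s <;> simp_all
  induction z generalizing p with
  | nil =>
    cases p with
    | nil => exact ⟨[], [], rfl, rfl, h⟩
    | cons x p => simp [phiW_nil] at h
  | cons a z ih =>
    rcases p with _ | ⟨x, p⟩
    · exact ⟨[], a :: z, rfl, rfl, h⟩
    rw [phiW_cons, List.append_assoc, List.append_eq_append_iff] at h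
    rcases h with ⟨r, hr, hs'⟩ | ⟨p', hp', hz⟩
    · cases r with
      | nil => exact ⟨[a], z, rfl, by rw [phiW_singleton, hr, List.append_nil], hs'⟩
      | cons y r =>
        obtain rfl : y = 0 := (List.cons.inj hs').1.symm
        exact absurd (by simp [hr]) (zero_notMem_tail_phiL hd a)
    · obtain ⟨z₁, z₂, rfl, rfl, hz₂⟩ := ih hz.symm
      exact ⟨a :: z₁, z₂, rfl, by rw [hp', phiW_cons], hz₂⟩

theorem exists_append_append_eq_of_append_eq_phiW {d : ℕ} (hd : 2 ≤ d) {p t q z : List ℕ}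
    (ht : (t ++ 0 :: q).head? = some 0) (h : p ++ (t ++ 0 :: q) = phiW d z ++ [0]) :
    ∃ z₁ v z₂, z = z₁ ++ v ++ z₂ ∧ p = phiW d z₁ ∧ t = phiW d v ∧ 0 :: q = phiW d z₂ ++ [0] := by
  obtain ⟨z₁, z', rfl, hp, hz'⟩ := exists_append_eq_of_append_eq_phiW hd ht h
  obtain ⟨v, z₂, rfl, hv, hz₂⟩ := exists_append_eq_of_append_eq_phiW hd rfl hz'
  exact ⟨z₁, v, z₂, (List.append_assoc ..).symm, hp, hv, hz₂⟩

theorem exists_infix_tail_phiL_of_zero_notMem {d : ℕ} {w z : List ℕ} (hw : 0 ∉ w)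
    (h : w <:+: phiW d z ++ [0]) : ∃ a, w <:+: (phiL d a).tail := by
  have infix_tail {a : ℕ} (ha : w <:+: phiL d a) : w <:+: (phiL d a).tail := by
    rw [phiL_eq_cons_replicate, List.infix_cons_iff] at ha
    rcases ha with ha | ha
    · cases w with
      | nil => exact List.nil_infix
      | cons x w => simp_all
    · rwa [phiL_eq_cons_replicate]
  induction z with
  | nil =>
    refine ⟨0, infix_tail (h.trans ?_)⟩
    rw [phiL_eq_cons_replicate]
    exact ⟨[], _, rfl⟩
  | cons a z ih =>
    rw [phiW_cons, List.append_assoc, List.infix_append_iff] at h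
    rcases h with h | h | ⟨l₁, l₂, rfl, hl₁, hl₂⟩
    · exact ⟨a, infix_tail h⟩
    · exact ih h
    · have hhead := head?_phiW_append_zero_cons d z []
      cases l₂ with
      | nil => exact ⟨a, infix_tail (by simpa using hl₁.isInfix)⟩
      | cons x l₂ =>
        obtain ⟨r, hr⟩ := hl₂
        rw [← hr] at hhead
        obtain rfl : x = 0 := Option.some.inj hhead
        exact absurd (by simp) hw

/-! ### The language -/

/-- The language of the fixed point of `φ_d`, as the set of factors of the words `F_n`. This
description makes its closure under reversal visible, since the `F_n` are palindromes. -/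
def phiLanguage (d : ℕ) : Set (List ℕ) := {w | ∃ n, w <:+: Fword d n}

section Language

variable {d : ℕ} {v w : List ℕ}

theorem Fword_mem_phiLanguage (d n : ℕ) : Fword d n ∈ phiLanguage d := ⟨n, List.infix_rfl⟩

theorem mem_phiLanguage_of_infix (hw : w ∈ phiLanguage d) (h : v <:+: w) :
    v ∈ phiLanguage d := by
  obtain ⟨n, hn⟩ := hw
  exact ⟨n, h.trans hn⟩

theorem mem_phiLanguage_of_cons {a : ℕ} (h : a :: w ∈ phiLanguage d) : w ∈ phiLanguage d :=
  mem_phiLanguage_of_infix h (List.suffix_cons a w).isInfix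

theorem phiW_append_zero_mem_phiLanguage (h : w ∈ phiLanguage d) :
    phiW d w ++ [0] ∈ phiLanguage d := by
  obtain ⟨n, p, s, hn⟩ := h
  obtain ⟨t, ht⟩ := List.head?_eq_some_iff.mp (head?_phiW_append_zero_cons d s [])
  refine ⟨n + 1, phiW d p, t, ?_⟩
  rw [Fword, ← hn, phiW_append, phiW_append, List.append_assoc _ (phiW d s), ht]
  simp

theorem reverse_Fword (d n : ℕ) : (Fword d n).reverse = Fword d n := by
  induction n with
  | zero => rfl
  | succ n ih => rw [Fword, reverse_phiW_append_zero, ih]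

theorem reverse_mem_phiLanguage : w.reverse ∈ phiLanguage d ↔ w ∈ phiLanguage d :=
  exists_congr fun n => by rw [← List.reverse_infix, List.reverse_reverse, reverse_Fword]

theorem lt_of_mem_Fword (hd : 0 < d) (n : ℕ) : ∀ x ∈ Fword d n, x < d := by
  induction n with
  | zero => simp [Fword]
  | succ n _ =>
    intro x hx
    rw [Fword, phiW, List.mem_append, List.mem_flatMap, List.mem_singleton] at hx
    rcases hx with ⟨a, -, hx⟩ | rfl
    · rw [phiL_eq_cons_replicate, List.mem_cons, List.mem_replicate] at hx
      unfold phiLast at hx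
      omega
    · exact hd

theorem lt_of_mem_phiLanguage (hd : 0 < d) (h : w ∈ phiLanguage d) : ∀ x ∈ w, x < d := by
  obtain ⟨n, hn⟩ := h
  exact fun x hx => lt_of_mem_Fword hd n x (hn.subset hx)

theorem singleton_mem_phiLanguage {i : ℕ} (hi : i ≤ d - 1) : [i] ∈ phiLanguage d := by
  induction i with
  | zero => exact Fword_mem_phiLanguage d 1
  | succ i ih =>
    have h := phiW_append_zero_mem_phiLanguage (ih (by omega))
    rw [phiW_singleton, phiL, if_pos (by omega)] at h
    exact mem_phiLanguage_of_infix h ⟨[0], [0], rfl⟩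

theorem cons_Fword_append_last_mem_phiLanguage (d n : ℕ) :
    (d - 1) :: (Fword d n ++ [d - 1]) ∈ phiLanguage d := by
  induction n with
  | zero =>
    have h := phiW_append_zero_mem_phiLanguage (singleton_mem_phiLanguage (le_refl (d - 1)))
    rw [phiW_singleton, phiL_pred_last] at h
    exact mem_phiLanguage_of_infix h ⟨[0], [0], rfl⟩
  | succ n ih =>
    have h := phiW_append_zero_mem_phiLanguage ih
    rw [phiW_cons, phiW_append, phiW_singleton, phiL_pred_last] at h
    exact mem_phiLanguage_of_infix h ⟨[0, d - 1], [d - 1, 0], by simp [Fword]⟩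

theorem exists_cons_append_mem_phiLanguage (h : w ∈ phiLanguage d) :
    ∃ a b, a :: (w ++ [b]) ∈ phiLanguage d := by
  obtain ⟨n, p, s, hn⟩ := h
  obtain ⟨p', a, hp⟩ := ((d - 1) :: p).eq_nil_or_concat'.resolve_left (List.cons_ne_nil _ _)
  obtain ⟨b, s', hs⟩ := List.exists_cons_of_ne_nil (List.append_ne_nil_of_right_ne_nil s
    (List.cons_ne_nil (d - 1) []))
  refine ⟨a, b, mem_phiLanguage_of_infix (cons_Fword_append_last_mem_phiLanguage d n)
    ⟨p', s', ?_⟩⟩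
  calc p' ++ a :: (w ++ [b]) ++ s' = (p' ++ [a]) ++ w ++ (b :: s') := by simp
    _ = (d - 1) :: (p ++ w ++ s ++ [d - 1]) := by rw [← hp, ← hs]; simp
    _ = (d - 1) :: (Fword d n ++ [d - 1]) := by rw [hn]

theorem exists_append_mem_phiLanguage (h : w ∈ phiLanguage d) :
    ∃ b, w ++ [b] ∈ phiLanguage d := by
  obtain ⟨a, b, hab⟩ := exists_cons_append_mem_phiLanguage h
  exact ⟨b, mem_phiLanguage_of_cons hab⟩

theorem exists_cons_mem_phiLanguage (h : w ∈ phiLanguage d) :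
    ∃ a, a :: w ∈ phiLanguage d := by
  obtain ⟨a, b, hab⟩ := exists_cons_append_mem_phiLanguage h
  exact ⟨a, mem_phiLanguage_of_infix hab (List.prefix_append (a :: w) [b]).isInfix⟩

theorem exists_infix_phiW_append_zero_of_mem (h : w ∈ phiLanguage d) :
    ∃ z ∈ phiLanguage d, w <:+: phiW d z ++ [0] := by
  obtain ⟨n | n, hn⟩ := h
  · exact ⟨[], Fword_mem_phiLanguage d 0, hn.trans List.nil_infix⟩
  · exact ⟨Fword d n, Fword_mem_phiLanguage d n, hn⟩

theorem exists_infix_tail_phiL_of_mem (h0 : 0 ∉ w) (h : w ∈ phiLanguage d) :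
    ∃ a, w <:+: (phiL d a).tail := by
  obtain ⟨z, -, hz⟩ := exists_infix_phiW_append_zero_of_mem h
  exact exists_infix_tail_phiL_of_zero_notMem h0 hz

theorem zero_mem_of_cons_cons_cons_mem {a b c : ℕ} (h : a :: b :: c :: w ∈ phiLanguage d) :
    0 ∈ [a, b, c] := by
  by_contra h0
  obtain ⟨i, hi⟩ := exists_infix_tail_phiL_of_mem h0
    (mem_phiLanguage_of_infix h (List.prefix_append [a, b, c] w).isInfix)
  have hlength := hi.length_le
  rw [phiL_eq_cons_replicate, List.tail_cons, List.length_replicate] at hlength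
  split_ifs at hlength <;> simp at hlength

theorem eq_last_of_pair_mem_phiLanguage {a b : ℕ} (ha : a ≠ 0) (hb : b ≠ 0)
    (h : [a, b] ∈ phiLanguage d) : a = d - 1 ∧ b = d - 1 := by
  obtain ⟨i, hi⟩ := exists_infix_tail_phiL_of_mem (by simp [ha.symm, hb.symm]) h
  rw [phiL_eq_cons_replicate, List.tail_cons, List.infix_replicate_iff] at hi
  unfold phiLast at hi
  simp only [List.length_cons, List.length_nil, List.replicate_succ, List.replicate_zero,
    List.cons.injEq, and_true] at hi
  split_ifs at hi <;> omega

theorem eq_last_of_cons_cons_mem_phiLanguage {a b : ℕ} (ha : a ≠ 0) (hb : b ≠ 0)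
    (h : a :: b :: w ∈ phiLanguage d) : a = d - 1 ∧ b = d - 1 :=
  eq_last_of_pair_mem_phiLanguage ha hb
    (mem_phiLanguage_of_infix h (List.prefix_append [a, b] w).isInfix)

theorem exists_eq_phiW_append_zero {t : List ℕ} (hd : 2 ≤ d)
    (ht : (t ++ [0]).head? = some 0) (h : t ++ [0] ∈ phiLanguage d) :
    ∃ v ∈ phiLanguage d, t = phiW d v := by
  obtain ⟨z, hz, p, s, hps⟩ := exists_infix_phiW_append_zero_of_mem h
  obtain ⟨z₁, v, z₂, rfl, -, hv, -⟩ := exists_append_append_eq_of_append_eq_phiW hd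
    (p := p) (t := t) (q := s) (by cases t <;> simp_all) (by simpa using hps)
  exact ⟨v, mem_phiLanguage_of_infix hz (List.infix_append ..), hv⟩

theorem exists_append_mem_phiLanguage_of_phiW {p q : List ℕ} (hd : 2 ≤ d)
    (hv : ∀ x ∈ v, x < d) (h : p ++ (phiW d v ++ 0 :: q) ∈ phiLanguage d) :
    ∃ z₁ z₂, z₁ ++ v ++ z₂ ∈ phiLanguage d ∧ p <:+ phiW d z₁ ∧
      0 :: q <+: phiW d z₂ ++ [0] := by
  obtain ⟨z, hz, P, S, hPS⟩ := exists_infix_phiW_append_zero_of_mem h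
  obtain ⟨z₁, v', z₂, rfl, hz₁, hv', hz₂⟩ := exists_append_append_eq_of_append_eq_phiW hd
    (head?_phiW_append_zero_cons d v (q ++ S)) (p := P ++ p) (by simpa using hPS)
  have hv'd := lt_of_mem_phiLanguage (by omega) (mem_phiLanguage_of_infix hz (List.infix_append ..))
  obtain rfl : v = v' := phiW_injOn hd hv hv'd hv'
  exact ⟨z₁, z₂, hz, ⟨P, hz₁⟩, ⟨S, hz₂⟩⟩

theorem phiW_append_zero_mem_phiLanguage_iff (hd : 2 ≤ d) (hv : ∀ x ∈ v, x < d) :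
    phiW d v ++ [0] ∈ phiLanguage d ↔ v ∈ phiLanguage d := by
  refine ⟨fun h => ?_, phiW_append_zero_mem_phiLanguage⟩
  obtain ⟨z₁, z₂, hz, -⟩ := exists_append_mem_phiLanguage_of_phiW hd hv (p := []) (q := []) h
  exact mem_phiLanguage_of_infix hz (List.infix_append ..)

theorem cons_phiW_append_mem_phiLanguage_iff (hd : 2 ≤ d) (hv : ∀ x ∈ v, x < d) {a b : ℕ} :
    a :: (phiW d v ++ [0, b]) ∈ phiLanguage d ↔
      ∃ i j, i :: (v ++ [j]) ∈ phiLanguage d ∧ phiLast d i = a ∧ phiLast d j = b := by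
  constructor
  · intro h
    obtain ⟨z₁, z₂, hz, hz₁, hz₂⟩ :=
      exists_append_mem_phiLanguage_of_phiW hd hv (p := [a]) (q := [b]) h
    obtain ⟨z₁, i, rfl⟩ := z₁.eq_nil_or_concat'.resolve_left (by
      rintro rfl; simp [phiW_nil] at hz₁)
    obtain ⟨j, z₂, rfl⟩ := List.exists_cons_of_ne_nil (l := z₂) (by
      rintro rfl; simp [phiW_nil] at hz₂)
    obtain ⟨s, hs⟩ := exists_phiL_eq_concat d i
    obtain ⟨r, hr⟩ := exists_phiL_eq_cons_cons d j
    refine ⟨i, j, mem_phiLanguage_of_infix hz ⟨z₁, z₂, by simp⟩, ?_, ?_⟩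
    · rw [phiW_append, phiW_singleton, hs, ← List.append_assoc, List.suffix_concat_iff] at hz₁
      obtain ⟨t, ht, -⟩ := hz₁.resolve_left (List.cons_ne_nil _ _)
      exact (List.singleton_inj.mp (List.append_inj' (s₁ := []) ht rfl).2).symm
    · rw [phiW_cons, hr] at hz₂
      simpa [eq_comm] using hz₂
  · rintro ⟨i, j, h, rfl, rfl⟩
    have h := phiW_append_zero_mem_phiLanguage h
    obtain ⟨s, hs⟩ := exists_phiL_eq_concat d i
    obtain ⟨r, hr⟩ := exists_phiL_eq_cons_cons d j
    rw [phiW_cons, phiW_append, phiW_singleton, hs, hr] at h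
    exact mem_phiLanguage_of_infix h ⟨s, r ++ [0], by simp⟩

end Language

/-! ### Left and right extensions -/

/-- The letters `a` such that `aw` belongs to the language. A word is left special when this set is
nontrivial. -/
def leftLetters (d : ℕ) (w : List ℕ) : Set ℕ := {a | a :: w ∈ phiLanguage d}

/-- The letters `b` such that `wb` belongs to the language. A word is right special when this set
is nontrivial. -/
def rightLetters (d : ℕ) (w : List ℕ) : Set ℕ := {b | w ++ [b] ∈ phiLanguage d}

section Extensions

variable {d : ℕ} {v w : List ℕ}

theorem leftLetters_reverse (d : ℕ) (w : List ℕ) :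
    leftLetters d w.reverse = rightLetters d w := by
  ext a
  rw [leftLetters, rightLetters, Set.mem_ofPred_eq, Set.mem_ofPred_eq,
    ← reverse_mem_phiLanguage, List.reverse_cons, List.reverse_reverse]

theorem rightLetters_reverse (d : ℕ) (w : List ℕ) :
    rightLetters d w.reverse = leftLetters d w := by
  rw [← leftLetters_reverse, List.reverse_reverse]

theorem leftLetters_Fword (d n : ℕ) : leftLetters d (Fword d n) = rightLetters d (Fword d n) := by
  rw [← leftLetters_reverse, reverse_Fword]

theorem leftLetters_append_subset (d : ℕ) (v w : List ℕ) :
    leftLetters d (v ++ w) ⊆ leftLetters d v :=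
  fun a h => mem_phiLanguage_of_infix h (List.prefix_append (a :: v) w).isInfix

theorem rightLetters_cons_subset (d a : ℕ) (w : List ℕ) :
    rightLetters d (a :: w) ⊆ rightLetters d w :=
  fun _ h => mem_phiLanguage_of_cons h

theorem mem_phiLanguage_of_nontrivial_leftLetters (h : (leftLetters d w).Nontrivial) :
    w ∈ phiLanguage d := by
  obtain ⟨a, ha⟩ := h.nonempty
  exact mem_phiLanguage_of_cons ha

theorem lt_of_mem_leftLetters {a : ℕ} (hd : 0 < d) (h : a ∈ leftLetters d w) : a < d :=
  lt_of_mem_phiLanguage hd h a List.mem_cons_self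

theorem leftLetters_phiW_append_zero (hd : 2 ≤ d) (hv : ∀ x ∈ v, x < d) :
    leftLetters d (phiW d v ++ [0]) = phiLast d '' leftLetters d v := by
  ext a
  constructor
  · intro h
    obtain ⟨b, hb⟩ := exists_append_mem_phiLanguage h
    obtain ⟨i, j, hij, hi, -⟩ := (cons_phiW_append_mem_phiLanguage_iff hd hv (b := b)).mp
      (by simpa using hb)
    exact ⟨i, leftLetters_append_subset d v [j] hij, hi⟩
  · rintro ⟨i, hi, rfl⟩
    obtain ⟨j, hj⟩ := exists_append_mem_phiLanguage hi
    have h := (cons_phiW_append_mem_phiLanguage_iff hd hv).mpr ⟨i, j, hj, rfl, rfl⟩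
    exact leftLetters_append_subset d _ [phiLast d j] (by simpa [leftLetters] using h)

theorem rightLetters_phiW_append_zero (hd : 2 ≤ d) (hv : ∀ x ∈ v, x < d) :
    rightLetters d (phiW d v ++ [0]) = phiLast d '' rightLetters d v := by
  rw [← leftLetters_reverse, reverse_phiW_append_zero,
    leftLetters_phiW_append_zero hd (by simpa using hv), leftLetters_reverse]

theorem eq_last_of_mem_leftLetters_cons {a x : ℕ} (hx : x ≠ 0) (h : a ∈ leftLetters d (x :: w))
    (ha : a ≠ 0) : a = d - 1 ∧ x = d - 1 :=
  eq_last_of_cons_cons_mem_phiLanguage ha hx h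

theorem leftLetters_cons_subset {x : ℕ} (hx : x ≠ 0) :
    leftLetters d (x :: w) ⊆ {0, d - 1} := fun _ ha =>
  or_iff_not_imp_left.mpr fun ha0 => (eq_last_of_mem_leftLetters_cons hx ha ha0).1

theorem leftLetters_cons_eq_of_nontrivial {x : ℕ} (hx : x ≠ 0)
    (h : (leftLetters d (x :: w)).Nontrivial) : leftLetters d (x :: w) = {0, d - 1} := by
  refine (leftLetters_cons_subset hx).antisymm ?_
  obtain ⟨a, ha, b, hb, hab⟩ := h
  rcases leftLetters_cons_subset hx ha with rfl | rfl <;>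
    rcases leftLetters_cons_subset hx hb with rfl | rfl <;>
    simp_all [Set.insert_subset_iff]

theorem eq_last_of_nontrivial_leftLetters_cons {x : ℕ} (hx : x ≠ 0)
    (h : (leftLetters d (x :: w)).Nontrivial) : x = d - 1 := by
  obtain ⟨a, ha, ha0⟩ := h.exists_ne 0
  exact (eq_last_of_mem_leftLetters_cons hx ha ha0).2

theorem head?_eq_zero_of_last_mem_leftLetters (hd : 2 ≤ d) (hw : w ≠ [])
    (h : d - 1 ∈ leftLetters d ((d - 1) :: w)) : w.head? = some 0 := by
  obtain ⟨y, t, rfl⟩ := List.exists_cons_of_ne_nil hw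
  by_contra hy
  have h0 := zero_mem_of_cons_cons_cons_mem h
  simp only [List.mem_cons, List.not_mem_nil, List.head?_cons, Option.some.injEq, or_false]
    at h0 hy
  omega

theorem mem_leftLetters_of_nontrivial_leftLetters_last_cons_phiW (hd : 2 ≤ d)
    (hv : ∀ x ∈ v, x < d)
    (h : (leftLetters d ((d - 1) :: (phiW d v ++ [0]))).Nontrivial) :
    d - 2 ∈ leftLetters d v ∧ d - 1 ∈ leftLetters d v := by
  have hletters := leftLetters_cons_eq_of_nontrivial (by omega) h
  have h0 : 0 :: (d - 1) :: (phiW d v ++ [0]) ∈ phiLanguage d :=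
    hletters.ge (Set.mem_insert _ _)
  have h1 : (d - 1) :: (d - 1) :: (phiW d v ++ [0]) ∈ phiLanguage d :=
    hletters.ge (Set.mem_insert_of_mem _ rfl)
  constructor
  · refine (phiW_append_zero_mem_phiLanguage_iff hd (List.forall_mem_cons.mpr ⟨by omega, hv⟩)).mp ?_
    rwa [phiW_cons, phiL, if_pos (by omega), show d - 2 + 1 = d - 1 by omega]
  · obtain ⟨c, hc⟩ := exists_cons_mem_phiLanguage h1
    obtain rfl : c = 0 := by
      have h0 := zero_mem_of_cons_cons_cons_mem hc
      simp only [List.mem_cons, List.not_mem_nil, or_false] at h0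
      omega
    refine (phiW_append_zero_mem_phiLanguage_iff hd (List.forall_mem_cons.mpr ⟨by omega, hv⟩)).mp ?_
    rwa [phiW_cons, phiL_pred_last]

theorem min_le_of_mem_leftLetters_Fword (hd : 2 ≤ d) {n a : ℕ}
    (h : a ∈ leftLetters d (Fword d n)) : min n (d - 1) ≤ a := by
  induction n generalizing a with
  | zero => omega
  | succ n ih =>
    rw [Fword, leftLetters_phiW_append_zero hd (lt_of_mem_Fword (by omega) n)] at h
    obtain ⟨i, hi, rfl⟩ := h
    have := ih hi
    unfold phiLast
    omega

theorem leftLetters_Fword_subset (hd : 2 ≤ d) {n : ℕ} (hn : d ≤ n + 2) :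
    leftLetters d (Fword d n) ⊆ {d - 2, d - 1} := by
  intro a ha
  have hmin := min_le_of_mem_leftLetters_Fword hd ha
  have hlt := lt_of_mem_leftLetters (by omega) ha
  rw [Set.mem_insert_iff, Set.mem_singleton_iff]
  omega

theorem eq_or_eq_last_of_cons_Fword_append_mem (hd : 2 ≤ d) {n a b : ℕ} (hn : n < a)
    (h : a :: (Fword d n ++ [b]) ∈ phiLanguage d) : b = n ∨ b = d - 1 := by
  induction n generalizing a b with
  | zero =>
    rw [or_iff_not_imp_left]
    exact fun hb => (eq_last_of_pair_mem_phiLanguage hn.ne' hb h).2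
  | succ n ih =>
    rw [Fword, List.append_assoc] at h
    obtain ⟨i, j, hij, rfl, rfl⟩ :=
      (cons_phiW_append_mem_phiLanguage_iff hd (lt_of_mem_Fword (by omega) n)).mp h
    unfold phiLast at hn ⊢
    have := ih (by omega) hij
    omega

end Extensions

/-! ### Bispecial factors -/

/-- The property of `w` established for all bispecial factors by induction on the length: both
`(d-1)w` and `w(d-1)` are in the language, and on either side `w` has at most one extension by a
letter other than `d-1`, unless it is one of `F_0, …, F_{d-3}`. -/
structure LastExtendable (d : ℕ) (w : List ℕ) : Prop where
  last_mem_left : d - 1 ∈ leftLetters d w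
  last_mem_right : d - 1 ∈ rightLetters d w
  eq_Fword_or_subset : (∃ n, n + 3 ≤ d ∧ w = Fword d n) ∨
    (∃ c, leftLetters d w ⊆ {c, d - 1}) ∧ ∃ c, rightLetters d w ⊆ {c, d - 1}

namespace LastExtendable

variable {d : ℕ} {v w : List ℕ}

theorem reverse (h : LastExtendable d w) : LastExtendable d w.reverse where
  last_mem_left := by rw [leftLetters_reverse]; exact h.last_mem_right
  last_mem_right := by rw [rightLetters_reverse]; exact h.last_mem_left
  eq_Fword_or_subset := by
    rw [leftLetters_reverse, rightLetters_reverse]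
    refine h.eq_Fword_or_subset.imp ?_ And.symm
    rintro ⟨n, hn, rfl⟩
    exact ⟨n, hn, reverse_Fword d n⟩

theorem of_Fword (hd : 2 ≤ d) (n : ℕ) : LastExtendable d (Fword d n) := by
  have hlast := cons_Fword_append_last_mem_phiLanguage d n
  refine ⟨leftLetters_append_subset d _ [d - 1] hlast, mem_phiLanguage_of_cons hlast, ?_⟩
  rw [← leftLetters_Fword, and_self]
  by_cases hn : n + 3 ≤ d
  · exact Or.inl ⟨n, hn, rfl⟩
  · exact Or.inr ⟨d - 2, leftLetters_Fword_subset hd (by omega)⟩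

theorem of_nontrivial_last_cons_append_last {t s : List ℕ} (hd : 2 ≤ d)
    (ht : w = (d - 1) :: t) (hs : w = s ++ [d - 1])
    (hL : (leftLetters d w).Nontrivial) (hR : (rightLetters d w).Nontrivial) :
    LastExtendable d w := by
  have hd1 : d - 1 ≠ 0 := by omega
  have hleft : leftLetters d w = {0, d - 1} := by
    rw [ht] at hL ⊢
    exact leftLetters_cons_eq_of_nontrivial hd1 hL
  have hright : rightLetters d w = {0, d - 1} := by
    rw [hs, ← leftLetters_reverse, List.reverse_append, List.reverse_singleton,
      List.singleton_append] at hR ⊢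
    exact leftLetters_cons_eq_of_nontrivial hd1 hR
  exact ⟨by simp [hleft], by simp [hright], Or.inr ⟨⟨0, hleft.le⟩, 0, hright.le⟩⟩

theorem phiW_append_zero (hd : 2 ≤ d) (hv : ∀ x ∈ v, x < d) (h : LastExtendable d v) :
    LastExtendable d (phiW d v ++ [0]) := by
  have hleft := leftLetters_phiW_append_zero hd hv
  have hright := rightLetters_phiW_append_zero hd hv
  have image_subset {s : Set ℕ} {c : ℕ} (hs : s ⊆ {c, d - 1}) :
      phiLast d '' s ⊆ {phiLast d c, d - 1} :=
    (Set.image_mono hs).trans (by rw [Set.image_pair, phiLast_last])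
  rcases h.eq_Fword_or_subset with ⟨n, -, rfl⟩ | ⟨⟨c, hc⟩, c', hc'⟩
  · exact of_Fword hd (n + 1)
  · refine ⟨?_, ?_, Or.inr ⟨⟨phiLast d c, ?_⟩, phiLast d c', ?_⟩⟩
    · exact hleft ▸ ⟨d - 1, h.last_mem_left, phiLast_last d⟩
    · exact hright ▸ ⟨d - 1, h.last_mem_right, phiLast_last d⟩
    · exact hleft ▸ image_subset hc
    · exact hright ▸ image_subset hc'

theorem exists_cons_append_last_mem (hd : 2 ≤ d) (h : LastExtendable d v)
    (hpen : d - 2 ∈ leftLetters d v) :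
    ∃ i, i :: (v ++ [d - 1]) ∈ phiLanguage d ∧ phiLast d i = d - 1 := by
  rcases h.eq_Fword_or_subset with ⟨n, -, rfl⟩ | ⟨⟨c, hc⟩, -⟩
  · exact ⟨d - 1, cons_Fword_append_last_mem_phiLanguage d n, phiLast_last d⟩
  · obtain ⟨i, hi⟩ := exists_cons_mem_phiLanguage h.last_mem_right
    have hcd : d - 2 = c ∨ d - 2 = d - 1 := hc hpen
    have hic : i = c ∨ i = d - 1 := hc (leftLetters_append_subset d v [d - 1] hi)
    refine ⟨i, hi, ?_⟩
    unfold phiLast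
    omega

theorem exists_forall_cons_append_mem (hd : 2 ≤ d) (h : LastExtendable d v) :
    ∃ c, ∀ i j, i :: (v ++ [j]) ∈ phiLanguage d → phiLast d i = d - 1 → j = c ∨ j = d - 1 := by
  rcases h.eq_Fword_or_subset with ⟨n, hn, rfl⟩ | ⟨-, c, hc⟩
  · refine ⟨n, fun i j hij hi => eq_or_eq_last_of_cons_Fword_append_mem hd ?_ hij⟩
    unfold phiLast at hi
    omega
  · exact ⟨c, fun i j hij _ => hc (mem_phiLanguage_of_cons hij)⟩

theorem last_cons_phiW_append_zero (hd : 2 ≤ d) (hv : ∀ x ∈ v, x < d)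
    (h : LastExtendable d v)
    (hL : (leftLetters d ((d - 1) :: (phiW d v ++ [0]))).Nontrivial) :
    LastExtendable d ((d - 1) :: (phiW d v ++ [0])) := by
  have hleft := leftLetters_cons_eq_of_nontrivial (by omega) hL
  have mem_right (b : ℕ) : b ∈ rightLetters d ((d - 1) :: (phiW d v ++ [0])) ↔
      ∃ i j, i :: (v ++ [j]) ∈ phiLanguage d ∧ phiLast d i = d - 1 ∧ phiLast d j = b := by
    rw [← cons_phiW_append_mem_phiLanguage_iff hd hv]
    simp [rightLetters]
  obtain ⟨c, hc⟩ := h.exists_forall_cons_append_mem hd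
  refine ⟨by simp [hleft], ?_, Or.inr ⟨⟨0, hleft.le⟩, phiLast d c, fun b hb => ?_⟩⟩
  · obtain ⟨hpen, -⟩ := mem_leftLetters_of_nontrivial_leftLetters_last_cons_phiW hd hv hL
    obtain ⟨i, hi, hei⟩ := h.exists_cons_append_last_mem hd hpen
    exact (mem_right _).mpr ⟨i, d - 1, hi, hei, phiLast_last d⟩
  · obtain ⟨i, j, hij, hi, rfl⟩ := (mem_right b).mp hb
    rcases hc i j hij hi with rfl | rfl
    · exact Or.inl rfl
    · exact Or.inr (phiLast_last d)

end LastExtendable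

/-- `w` inherits the property `LastExtendable` from a shorter bispecial word, in practice from the
bispecial `v` with `w = φ(v)0`, `w = (d-1)φ(v)0` or `w = φ(v)0(d-1)`. -/
def HasAntecedent (d : ℕ) (w : List ℕ) : Prop :=
  ∃ v : List ℕ, v.length < w.length ∧ (leftLetters d v).Nontrivial ∧
    (rightLetters d v).Nontrivial ∧ (LastExtendable d v → LastExtendable d w)

namespace HasAntecedent

variable {d : ℕ} {t w : List ℕ}

theorem reverse (h : HasAntecedent d w) : HasAntecedent d w.reverse := by
  obtain ⟨v, hlength, hL, hR, hvw⟩ := h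
  exact ⟨v, by rwa [List.length_reverse], hL, hR, fun hv => (hvw hv).reverse⟩

theorem of_zero_append_zero (hd : 2 ≤ d) (ht : (t ++ [0]).head? = some 0)
    (hL : (leftLetters d (t ++ [0])).Nontrivial) (hR : (rightLetters d (t ++ [0])).Nontrivial) :
    HasAntecedent d (t ++ [0]) := by
  obtain ⟨v, hv, rfl⟩ :=
    exists_eq_phiW_append_zero hd ht (mem_phiLanguage_of_nontrivial_leftLetters hL)
  have hvd := lt_of_mem_phiLanguage (by omega) hv
  rw [leftLetters_phiW_append_zero hd hvd] at hL
  rw [rightLetters_phiW_append_zero hd hvd] at hR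
  refine ⟨v, ?_, Set.nontrivial_of_image _ _ hL, Set.nontrivial_of_image _ _ hR,
    LastExtendable.phiW_append_zero hd hvd⟩
  rw [List.length_append, List.length_singleton]
  exact Nat.lt_succ_of_le (length_le_length_phiW d v)

theorem of_last_append_zero (hd : 2 ≤ d)
    (hL : (leftLetters d ((d - 1) :: (t ++ [0]))).Nontrivial)
    (hR : (rightLetters d ((d - 1) :: (t ++ [0]))).Nontrivial) :
    HasAntecedent d ((d - 1) :: (t ++ [0])) := by
  have hlast : d - 1 ∈ leftLetters d ((d - 1) :: (t ++ [0])) := by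
    simp [leftLetters_cons_eq_of_nontrivial (show d - 1 ≠ 0 by omega) hL]
  obtain ⟨v, hv, rfl⟩ := exists_eq_phiW_append_zero hd
    (head?_eq_zero_of_last_mem_leftLetters hd (by simp) hlast)
    (mem_phiLanguage_of_cons (mem_phiLanguage_of_nontrivial_leftLetters hL))
  have hvd := lt_of_mem_phiLanguage (by omega) hv
  obtain ⟨hpen, hvlast⟩ := mem_leftLetters_of_nontrivial_leftLetters_last_cons_phiW hd hvd hL
  have hvR : (rightLetters d v).Nontrivial := Set.nontrivial_of_image _ _ <|
    rightLetters_phiW_append_zero hd hvd ▸ hR.mono (rightLetters_cons_subset d (d - 1) _)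
  refine ⟨v, ?_, ⟨_, hpen, _, hvlast, by omega⟩, hvR,
    fun h => h.last_cons_phiW_append_zero hd hvd hL⟩
  have := length_le_length_phiW d v
  simp only [List.length_cons, List.length_append, List.length_nil]
  omega

theorem of_zero_append_last (hd : 2 ≤ d)
    (hL : (leftLetters d (0 :: (t ++ [d - 1]))).Nontrivial)
    (hR : (rightLetters d (0 :: (t ++ [d - 1]))).Nontrivial) :
    HasAntecedent d (0 :: (t ++ [d - 1])) := by
  have hrev : (0 :: (t ++ [d - 1])).reverse = (d - 1) :: (t.reverse ++ [0]) := by simp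
  rw [← rightLetters_reverse, hrev] at hL
  rw [← leftLetters_reverse, hrev] at hR
  rw [← List.reverse_reverse (0 :: (t ++ [d - 1])), hrev]
  exact (of_last_append_zero hd hR hL).reverse

end HasAntecedent

theorem eq_zero_or_last_of_nontrivial_leftLetters_cons {d x : ℕ} {w : List ℕ}
    (h : (leftLetters d (x :: w)).Nontrivial) : x = 0 ∨ x = d - 1 :=
  or_iff_not_imp_left.mpr fun hx => eq_last_of_nontrivial_leftLetters_cons hx h

theorem eq_zero_or_last_of_nontrivial_rightLetters_append {d x : ℕ} {w : List ℕ}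
    (h : (rightLetters d (w ++ [x])).Nontrivial) : x = 0 ∨ x = d - 1 := by
  rw [← leftLetters_reverse, List.reverse_append] at h
  exact eq_zero_or_last_of_nontrivial_leftLetters_cons h

theorem lastExtendable_or_hasAntecedent {d : ℕ} (hd : 2 ≤ d) {w : List ℕ}
    (hL : (leftLetters d w).Nontrivial) (hR : (rightLetters d w).Nontrivial) :
    LastExtendable d w ∨ HasAntecedent d w := by
  rcases w.eq_nil_or_concat' with rfl | ⟨s, y, rfl⟩
  · exact Or.inl (.of_Fword hd 0)
  have hy := eq_zero_or_last_of_nontrivial_rightLetters_append hR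
  cases s with
  | nil =>
    rcases hy with rfl | rfl
    · exact Or.inl (.of_Fword hd 1)
    · exact Or.inl (.of_nontrivial_last_cons_append_last (t := []) (s := []) hd rfl rfl hL hR)
  | cons x t =>
    rcases eq_zero_or_last_of_nontrivial_leftLetters_cons hL with rfl | rfl <;>
      rcases hy with rfl | rfl
    · exact Or.inr (.of_zero_append_zero hd rfl hL hR)
    · exact Or.inr (.of_zero_append_last hd hL hR)
    · exact Or.inr (.of_last_append_zero hd hL hR)
    · exact Or.inl (.of_nontrivial_last_cons_append_last hd rfl rfl hL hR)

theorem lastExtendable_of_nontrivial {d : ℕ} (hd : 2 ≤ d) {w : List ℕ}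
    (hL : (leftLetters d w).Nontrivial) (hR : (rightLetters d w).Nontrivial) :
    LastExtendable d w := by
  induction hn : w.length using Nat.strong_induction_on generalizing w with
  | _ n ih =>
    rcases lastExtendable_or_hasAntecedent hd hL hR with h | ⟨v, hlength, hvL, hvR, hvw⟩
    · exact h
    · exact hvw (ih v.length (hn ▸ hlength) hvL hvR rfl)

/-! ### Factors of the fixed point -/

theorem le_length_Fword (d n : ℕ) : n ≤ (Fword d n).length := by
  induction n with
  | zero => exact Nat.zero_le _
  | succ n ih =>
    rw [Fword, List.length_append, List.length_singleton]
    exact Nat.succ_le_succ (ih.trans (length_le_length_phiW d _))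

namespace IsPhiFixed

variable {d : ℕ} {u : ℕ → ℕ}

theorem Fword_eq_map_range (hu : IsPhiFixed d u) (n : ℕ) :
    Fword d n = (List.range (Fword d n).length).map u := by
  induction n with
  | zero => rfl
  | succ n ih =>
    have hF : Fword d (n + 1) = phiW d (Fword d n) ++ [0] := rfl
    -- Fixedness is applied to a prefix one letter longer than `F_n`: the image of that letter
    -- supplies the final `0` of `F_{n+1}`.
    have h := hu.2 ((Fword d n).length + 1)
    obtain ⟨r, hr⟩ := exists_phiL_eq_cons_cons d (u (Fword d n).length)
    rw [List.range_succ, List.map_append, ← ih, phiW_append, List.map_singleton, phiW_singleton,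
      hr, List.append_cons, ← hF, OccursAt, List.length_append, List.range_add,
      List.map_append] at h
    simp only [Nat.zero_add] at h
    exact (List.append_inj h (by simp)).1

theorem isFactorS_iff (hu : IsPhiFixed d u) {w : List ℕ} :
    IsFactorS w u ↔ w ∈ phiLanguage d := by
  constructor
  · rintro ⟨j, hj⟩
    obtain ⟨k, hk⟩ := Nat.exists_eq_add_of_le (le_length_Fword d (j + w.length))
    refine ⟨j + w.length, (List.range j).map u,
      ((List.range k).map (j + w.length + ·)).map u, ?_⟩
    rw [hu.Fword_eq_map_range, hk, List.range_add, List.range_add, List.map_append,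
      List.map_append, List.map_map (f := (j + ·))]
    congr 2
  · rintro ⟨n, p, s, h⟩
    have hprefix := hu.Fword_eq_map_range n
    rw [← h, List.length_append, List.length_append, List.range_add, List.range_add,
      List.map_append, List.map_append, List.map_map (f := (p.length + ·))] at hprefix
    exact ⟨p.length, (List.append_inj (List.append_inj hprefix (by simp)).1 (by simp)).2⟩

theorem Lext_eq_image (hu : IsPhiFixed d u) (w : List ℕ) :
    Lext u w = (· :: w) '' leftLetters d w := by
  ext x
  simp only [Lext, hu.isFactorS_iff]
  constructor
  · rintro ⟨i, rfl, hi⟩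
    exact ⟨i, hi, rfl⟩
  · rintro ⟨i, hi, rfl⟩
    exact ⟨i, rfl, hi⟩

theorem Rext_eq_image (hu : IsPhiFixed d u) (w : List ℕ) :
    Rext u w = (w ++ [·]) '' rightLetters d w := by
  ext x
  simp only [Rext, hu.isFactorS_iff]
  constructor
  · rintro ⟨i, rfl, hi⟩
    exact ⟨i, hi, rfl⟩
  · rintro ⟨i, hi, rfl⟩
    exact ⟨i, rfl, hi⟩

theorem ncard_Lext (hu : IsPhiFixed d u) (w : List ℕ) :
    (Lext u w).ncard = (leftLetters d w).ncard := by
  rw [hu.Lext_eq_image]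
  exact Set.ncard_image_of_injective _ fun _ _ h => (List.cons.inj h).1

theorem ncard_Rext (hu : IsPhiFixed d u) (w : List ℕ) :
    (Rext u w).ncard = (rightLetters d w).ncard := by
  rw [hu.Rext_eq_image]
  exact Set.ncard_image_of_injective _ fun _ _ h =>
    List.singleton_inj.mp (List.append_cancel_left h)

theorem lastExtendable_of_bispecial (hd : 2 ≤ d) (hu : IsPhiFixed d u) {w : List ℕ}
    (hw : Bispecial u w) : LastExtendable d w := by
  obtain ⟨-, hL, hR⟩ := hw
  rw [hu.ncard_Lext] at hL
  rw [hu.ncard_Rext] at hR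
  exact lastExtendable_of_nontrivial hd (Set.one_lt_ncard_iff_nontrivial_and_finite.mp hL).1
    (Set.one_lt_ncard_iff_nontrivial_and_finite.mp hR).1

end IsPhiFixed

theorem ncard_le_two_of_subset_pair {α : Type*} {s : Set α} {a b : α} (h : s ⊆ {a, b}) :
    s.ncard ≤ 2 :=
  (Set.ncard_le_ncard h (Set.toFinite _)).trans <|
    (Set.ncard_insert_le a {b}).trans_eq (by rw [Set.ncard_singleton])

theorem LastExtendable.exists_eq_Fword_of_two_lt_ncard {d : ℕ} {w : List ℕ}
    (h : LastExtendable d w)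
    (hcard : 2 < (leftLetters d w).ncard ∨ 2 < (rightLetters d w).ncard) :
    ∃ n, n + 3 ≤ d ∧ w = Fword d n := by
  refine h.eq_Fword_or_subset.resolve_right ?_
  rintro ⟨⟨c, hc⟩, c', hc'⟩
  exact hcard.elim (ncard_le_two_of_subset_pair hc).not_gt
    (ncard_le_two_of_subset_pair hc').not_gt

theorem statement8_general (d : ℕ) (hd : 2 ≤ d) (u : ℕ → ℕ) (hu : IsPhiFixed d u) :
    (∀ w : List ℕ, Bispecial u w →
      IsFactorS ((d - 1) :: w) u ∧ IsFactorS (w ++ [d - 1]) u) ∧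
    (∀ w : List ℕ, Bispecial u w →
      (2 < (Lext u w).ncard ∨ 2 < (Rext u w).ncard) →
      ∃ i : ℕ, i + 3 ≤ d ∧ w = Fword d i) := by
  refine ⟨fun w hw => ?_, fun w hw hcard => ?_⟩
  · have h := hu.lastExtendable_of_bispecial hd hw
    exact ⟨hu.isFactorS_iff.mpr h.last_mem_left, hu.isFactorS_iff.mpr h.last_mem_right⟩
  · rw [hu.ncard_Lext, hu.ncard_Rext] at hcard
    exact (hu.lastExtendable_of_bispecial hd hw).exists_eq_Fword_of_two_lt_ncard hcard

/-- Let `d ≥ 3`. Every bispecial factor `w` of `u_d` has `(d−1)w` and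
`w(d−1)` in `L(u_d)`, and the only bispecial factors with more than two left extensions
or more than two right extensions are `F_0, F_1, …, F_{d−3}`. -/
theorem statement8 (d : ℕ) (hd : 3 ≤ d) (u : ℕ → ℕ) (hu : IsPhiFixed d u) :
    (∀ w : List ℕ, Bispecial u w →
      IsFactorS ((d - 1) :: w) u ∧ IsFactorS (w ++ [d - 1]) u) ∧
    (∀ w : List ℕ, Bispecial u w →
      (2 < (Lext u w).ncard ∨ 2 < (Rext u w).ncard) →
      ∃ i : ℕ, i ≤ d - 3 ∧ w = Fword d i) := by
  obtain ⟨hlast, hmany⟩ := statement8_general d (by omega) u hu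
  exact ⟨hlast, fun w hw hcard => (hmany w hw hcard).imp fun i hi => ⟨by omega, hi.2⟩⟩

end RichRT
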